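/- arXiv:1510.06435 — 3 statements merged into one kernel-verified Lean document; each statement's English description precedes it below -/
import Mathlib

section
/- Let α, β₁, β₂, γ₁, γ₂ be complex numbers such that γ₁ and γ₂ are not nonpositive integers, and let A, B be real numbers with A > B > 2. Then A^{−α} · F₂(α; β₁, β₂; γ₁, γ₂; 1/A, 1 − B/A) = (A−1)^{−α} · F₂(α; γ₁−β₁, β₂; γ₁, γ₂; 1/(1−A), 1 − (1−B)/(1−A)), where A^{−α} and (A−1)^{−α} are principal branch powers of the positive reals A and A−1. (The hypotheses guarantee (1+A−B)/A < 1 and (1+A−B)/(A−1) < 1, so both F₂ series converge absolutely.) -/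
open Complex

/-- Pochhammer symbol `(x)_n` in `ℂ`. -/
noncomputable def cpoch (x : ℂ) (n : ℕ) : ℂ := (ascPochhammer ℂ n).eval x

/-- Appell's hypergeometric series `F₂`. -/
noncomputable def appellF2 (a b₁ b₂ c₁ c₂ z₁ z₂ : ℂ) : ℂ :=
  ∑' p : ℕ × ℕ, cpoch a (p.1 + p.2) * cpoch b₁ p.1 * cpoch b₂ p.2 /
    (cpoch c₁ p.1 * cpoch c₂ p.2 * (p.1.factorial : ℂ) * (p.2.factorial : ℂ)) *
    z₁ ^ p.1 * z₂ ^ p.2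

lemma cpoch_zero (x : ℂ) : cpoch x 0 = 1 := by simp [cpoch]
lemma cpoch_succ (x : ℂ) (n : ℕ) : cpoch x (n+1) = cpoch x n * (x + n) := by
  simp [cpoch, ascPochhammer_succ_eval]
lemma cpoch_succ_left (x : ℂ) (n : ℕ) : cpoch x (n+1) = x * cpoch (x+1) n := by
  simp [cpoch, ascPochhammer_succ_left, Polynomial.eval_comp]
lemma cpoch_add (x : ℂ) (n m : ℕ) : cpoch x (n+m) = cpoch x n * cpoch (x+n) m := by
  simp [cpoch, ← ascPochhammer_mul, Polynomial.eval_comp]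
lemma cpoch_one (n : ℕ) : cpoch 1 n = n.factorial := by
  simp [cpoch]
lemma cpoch_ne {x : ℂ} (h : ∀ n : ℕ, x ≠ -(n : ℂ)) (n : ℕ) : cpoch x n ≠ 0 := by
  induction n with
  | zero => simp [cpoch_zero]
  | succ n ih =>
    rw [cpoch_succ]
    exact mul_ne_zero ih fun h0 => h n (eq_neg_of_add_eq_zero_left h0)

lemma binom_hasSum (a x : ℂ) (hx : ‖x‖ < 1) :
    HasSum (fun n : ℕ => cpoch a n / n.factorial * x ^ n) ((1 - x) ^ (-a)) := by
  have h := (Complex.one_div_one_sub_cpow_hasFPowerSeriesOnBall_zero a).hasSum (y := x)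
    (by
      have : ‖x‖₊ < 1 := hx
      simpa [enorm_eq_nnnorm] using this)
  simp only [zero_add, FormalMultilinearSeries.ofScalars_apply_eq, ← Ring.multichoose_eq] at h
  rw [Complex.cpow_neg, ← one_div]
  refine Eq.mpr (congrArg (fun f => HasSum f (1 / (1 - x) ^ a)) (funext fun n => ?_)) h
  have := Ring.factorial_nsmul_multichoose_eq_ascPochhammer a n
  rw [Polynomial.ascPochhammer_smeval_cast, Polynomial.ascPochhammer_smeval_eq_eval] at this
  rw [cpoch, ← this, nsmul_eq_mul, smul_eq_mul, mul_div_cancel_left₀]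
  exact_mod_cast n.factorial_ne_zero

lemma ratio_bound (b c : ℂ) (hc : ∀ n : ℕ, c ≠ -(n : ℂ)) (r : ℝ) (hr : 1 < r) :
    ∃ C : ℝ, 0 ≤ C ∧ ∀ n, ‖cpoch b n / cpoch c n‖ ≤ C * r ^ n := by
  have hcn : ∀ n : ℕ, c + n ≠ 0 := fun n h0 => hc n (eq_neg_of_add_eq_zero_left h0)
  have hlim : Filter.Tendsto (fun n : ℕ => ‖(b + n) / (c + n)‖) Filter.atTop (nhds 1) := by
    have h1 : Filter.Tendsto (fun n : ℕ => (b - c) / (n : ℂ)) Filter.atTop (nhds 0) := 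
      tendsto_const_div_atTop_nhds_zero_nat _
    have h2 : Filter.Tendsto (fun n : ℕ => c / (n : ℂ)) Filter.atTop (nhds 0) := 
      tendsto_const_div_atTop_nhds_zero_nat _
    have h3 := ((h1.div (h2.const_add 1) (by simp)).const_add 1).norm
    simp only [zero_div, add_zero, norm_one] at h3
    refine h3.congr' ?_
    filter_upwards [Filter.eventually_gt_atTop 0] with n hn
    have hn' : (n : ℂ) ≠ 0 := by exact_mod_cast hn.ne'
    congr 1
    have := hcn n
    have : (n : ℂ) + c ≠ 0 := by rwa [add_comm]
    simp only [Pi.div_apply]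
    rw [show 1 + c / (n : ℂ) = (c + n) / n by field_simp; ring]
    field_simp
    ring
  obtain ⟨N, hN⟩ := Filter.eventually_atTop.1 (hlim.eventually_lt_const hr)
  have hstep : ∀ n ≥ N, ‖cpoch b n / cpoch c n‖ ≤ ‖cpoch b N / cpoch c N‖ * r ^ (n - N) := by
    intro n hn
    induction n, hn using Nat.le_induction with
    | base => simp
    | succ n hn ih =>
      rw [cpoch_succ, cpoch_succ, mul_div_mul_comm, norm_mul, Nat.sub_add_comm hn, pow_succ,
        ← mul_assoc]
      exact mul_le_mul ih (hN n hn).le (norm_nonneg _) (by positivity)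
  refine ⟨∑ k ∈ Finset.range (N + 1), ‖cpoch b k / cpoch c k‖,
    Finset.sum_nonneg fun _ _ => norm_nonneg _, fun n => ?_⟩
  have key : ∀ k ≤ N, ‖cpoch b k / cpoch c k‖ ≤
      ∑ k ∈ Finset.range (N + 1), ‖cpoch b k / cpoch c k‖ := fun k hk =>
    Finset.single_le_sum (f := fun k => ‖cpoch b k / cpoch c k‖) (fun _ _ => norm_nonneg _)
      (Finset.mem_range.2 (by omega))
  rcases le_total N n with h | h
  · refine (hstep n h).trans ?_
    exact mul_le_mul (key N le_rfl) (pow_le_pow_right₀ hr.le (by omega)) (by positivity)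
      (Finset.sum_nonneg fun _ _ => norm_nonneg _)
  · exact (key n h).trans (le_mul_of_one_le_right (Finset.sum_nonneg fun _ _ => norm_nonneg _)
      (one_le_pow₀ hr.le))

lemma binom_summable (u v : ℝ) (hu : 0 ≤ u) (hv : 0 ≤ v) (huv : u + v < 1) :
    Summable fun p : ℕ × ℕ => ((p.1 + p.2).factorial : ℝ) / (p.1.factorial * p.2.factorial)
      * u ^ p.1 * v ^ p.2 := by
  rw [← Finset.HasAntidiagonal.sigmaAntidiagonalEquivProd.summable_iff]
  refine (summable_sigma_of_nonneg (fun x => by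
    simp only [Function.comp]; positivity)).2 ⟨fun N => (hasSum_fintype _).summable, ?_⟩
  refine (summable_geometric_of_lt_one (add_nonneg hu hv) huv).congr fun N => ?_
  rw [tsum_fintype, add_pow, ← Finset.Nat.sum_antidiagonal_eq_sum_range_succ
    (fun i j => u ^ i * v ^ j * (N.choose i : ℝ)), ← Finset.sum_coe_sort]
  refine Finset.sum_congr rfl fun x _ => ?_
  obtain ⟨⟨i, j⟩, hx⟩ := x
  have : i + j = N := by simpa using hx
  subst this
  simp only [Function.comp, Finset.HasAntidiagonal.sigmaAntidiagonalEquivProd_apply]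
  rw [Nat.choose_symm_add, Nat.add_choose, Nat.cast_div (Nat.factorial_mul_factorial_dvd_factorial_add i j)
    (by positivity)]
  push_cast
  ring

lemma F2_summable (a b₁ b₂ c₁ c₂ z₁ z₂ : ℂ) (hc₁ : ∀ n : ℕ, c₁ ≠ -(n : ℂ))
    (hc₂ : ∀ n : ℕ, c₂ ≠ -(n : ℂ)) (hz : ‖z₁‖ + ‖z₂‖ < 1) :
    Summable fun p : ℕ × ℕ => cpoch a (p.1 + p.2) * cpoch b₁ p.1 * cpoch b₂ p.2 /
    (cpoch c₁ p.1 * cpoch c₂ p.2 * (p.1.factorial : ℂ) * (p.2.factorial : ℂ)) *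
    z₁ ^ p.1 * z₂ ^ p.2 := by
  obtain ⟨r, hr, hr2⟩ : ∃ r : ℝ, 1 < r ∧ r ^ 2 * (‖z₁‖ + ‖z₂‖) < 1 := by
    have hcont : Filter.Tendsto (fun r : ℝ => r ^ 2 * (‖z₁‖ + ‖z₂‖)) (nhdsWithin 1 (Set.Ioi 1))
        (nhds (1 ^ 2 * (‖z₁‖ + ‖z₂‖))) :=
      Filter.Tendsto.mono_left (by
        apply Continuous.tendsto (f := fun r : ℝ => r ^ 2 * (‖z₁‖ + ‖z₂‖)); fun_prop) nhdsWithin_le_nhds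
    have h1 := hcont.eventually_lt_const (u := 1) (by simpa using hz)
    obtain ⟨r, h, h'⟩ := (h1.and self_mem_nhdsWithin).exists
    exact ⟨r, h', h⟩
  obtain ⟨C₀, hC₀, h₀⟩ := ratio_bound a 1 (fun n h => by
    have := congrArg Complex.re h; simp at this; linarith [n.cast_nonneg (α := ℝ)]) r hr
  obtain ⟨C₁, hC₁, h₁⟩ := ratio_bound b₁ c₁ hc₁ r hr
  obtain ⟨C₂, hC₂, h₂⟩ := ratio_bound b₂ c₂ hc₂ r hr
  have hs := (binom_summable (r ^ 2 * ‖z₁‖) (r ^ 2 * ‖z₂‖) (by positivity) (by positivity)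
    (by linarith)).mul_left (C₀ * C₁ * C₂)
  refine Summable.of_norm_bounded hs fun ⟨m, n⟩ => ?_
  have hf : ((m + n).factorial : ℂ) ≠ 0 := by exact_mod_cast (m + n).factorial_ne_zero
  calc _ = ‖cpoch a (m + n) / cpoch 1 (m + n)‖ * ‖cpoch b₁ m / cpoch c₁ m‖ *
        ‖cpoch b₂ n / cpoch c₂ n‖ * (((m + n).factorial : ℝ) / (m.factorial * n.factorial)
      * ‖z₁‖ ^ m * ‖z₂‖ ^ n) := by
        rw [cpoch_one]
        simp only [norm_mul, norm_div, norm_pow, Complex.norm_natCast]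
        have : ((m + n).factorial : ℝ) ≠ 0 := by positivity
        field_simp
    _ ≤ (C₀ * r ^ (m + n)) * (C₁ * r ^ m) * (C₂ * r ^ n) *
        (((m + n).factorial : ℝ) / (m.factorial * n.factorial) * ‖z₁‖ ^ m * ‖z₂‖ ^ n) := by
        gcongr
        exacts [h₀ _, h₁ _, h₂ _]
    _ = _ := by simp only [mul_pow]; ring

lemma chu (N : ℕ) : ∀ (b c : ℂ), (∀ n : ℕ, c ≠ -(n : ℂ)) →
    ∑ k ∈ Finset.range (N + 1), (-1) ^ k * (N.choose k : ℂ) * (cpoch b k / cpoch c k) =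
      cpoch (c - b) N / cpoch c N := by
  induction N with
  | zero => intro b c _; simp [cpoch_zero]
  | succ N ih =>
    intro b c hc
    have hc' : ∀ n : ℕ, c + 1 ≠ -(n : ℂ) := fun n h => hc (n + 1) (by
      push_cast; linear_combination h)
    have hc0 : c ≠ 0 := by simpa using hc 0
    have hcN : c + N ≠ 0 := fun h0 => hc N (eq_neg_of_add_eq_zero_left h0)
    have h1 := ih b c hc
    have h2 := ih (b + 1) (c + 1) hc'
    have hs : ∑ k ∈ Finset.range (N + 1 + 1),
        (-1) ^ k * ((N + 1).choose k : ℂ) * (cpoch b k / cpoch c k) =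
      ∑ k ∈ Finset.range (N + 1), (-1) ^ k * (N.choose k : ℂ) * (cpoch b k / cpoch c k) -
      b / c * ∑ k ∈ Finset.range (N + 1), (-1) ^ k * (N.choose k : ℂ) *
        (cpoch (b + 1) k / cpoch (c + 1) k) := by
      have e : ∑ k ∈ Finset.range (N + 1), (-1) ^ k * (N.choose k : ℂ) * (cpoch b k / cpoch c k)
        = ∑ k ∈ Finset.range (N + 1 + 1),
          (-1) ^ k * (N.choose k : ℂ) * (cpoch b k / cpoch c k) := by
        rw [Finset.sum_range_succ _ (N + 1)]; simp
      rw [e, Finset.sum_range_succ', Finset.sum_range_succ' _ (N + 1), Finset.mul_sum,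
        add_sub_right_comm, ← Finset.sum_sub_distrib]
      simp only [Nat.choose_zero_right]
      congr 1
      refine Finset.sum_congr rfl fun k _ => ?_
      rw [Nat.choose_succ_succ, cpoch_succ_left b, cpoch_succ_left c, mul_div_mul_comm]
      push_cast
      ring
    have h3 : cpoch (c + 1) N = cpoch c N * (c + N) / c := by
      rw [← cpoch_succ, cpoch_succ_left, mul_div_cancel_left₀ _ hc0]
    rw [hs, h1, h2, h3, cpoch_succ, cpoch_succ, add_sub_add_right_eq_sub]
    have := cpoch_ne hc N
    field_simp
    ring

lemma pfaff (a b c x : ℂ) (hc : ∀ n : ℕ, c ≠ -(n : ℂ)) (hx : ‖x‖ + ‖x‖ < 1) :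
    ∑' N : ℕ, cpoch a N * cpoch b N / (cpoch c N * N.factorial) * x ^ N =
    (1 - x) ^ (-a) * ∑' k : ℕ, cpoch a k * cpoch (c - b) k / (cpoch c k * k.factorial) *
      (x / (x - 1)) ^ k := by
  have h1 : ∀ n : ℕ, (1 : ℂ) ≠ -(n : ℂ) := fun n h => by
    have := congrArg Complex.re h; simp at this; linarith [n.cast_nonneg (α := ℝ)]
  have hx1 : ‖x‖ < 1 := by linarith [norm_nonneg x]
  have hx0 : 1 - x ≠ 0 := fun h => by
    have : x = 1 := by linear_combination -h
    simp [this] at hx1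
  have hs := F2_summable a (c - b) 1 c 1 (-x) x hc h1 (by simpa using hx)
  have e1 := hs.tsum_prod' fun k => hs.prod_factor k
  have hs' := Finset.HasAntidiagonal.sigmaAntidiagonalEquivProd.summable_iff.2 hs
  have e2 := Summable.tsum_sigma' (fun N => (hasSum_fintype _).summable) hs'
  have e3 := (Equiv.tsum_eq Finset.HasAntidiagonal.sigmaAntidiagonalEquivProd
    (fun p : ℕ × ℕ => cpoch a (p.1 + p.2) * cpoch (c - b) p.1 * cpoch 1 p.2 /
    (cpoch c p.1 * cpoch 1 p.2 * (p.1.factorial : ℂ) * (p.2.factorial : ℂ)) *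
    (-x) ^ p.1 * x ^ p.2)).symm.trans e2
  rw [← tsum_mul_left]
  refine Eq.trans ?_ (e3.symm.trans (e1.trans ?_))
  · refine tsum_congr fun N => ?_
    rw [tsum_fintype]
    have h := chu N (c - b) c hc
    rw [sub_sub_cancel] at h
    rw [mul_comm (cpoch c N), mul_div_mul_comm, ← h, ← Finset.Nat.sum_antidiagonal_eq_sum_range_succ
      (fun i j => (-1) ^ i * (N.choose i : ℂ) * (cpoch (c - b) i / cpoch c i)),
      ← Finset.sum_coe_sort, mul_right_comm, Finset.mul_sum]
    refine Finset.sum_congr rfl fun p _ => ?_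
    obtain ⟨⟨i, j⟩, hp⟩ := p
    have : i + j = N := by simpa using hp
    subst this
    simp only [Function.comp, Finset.HasAntidiagonal.sigmaAntidiagonalEquivProd_apply]
    rw [Nat.choose_symm_add, Nat.add_choose, Nat.cast_div (Nat.factorial_mul_factorial_dvd_factorial_add i j)
      (by exact_mod_cast (by positivity : i.factorial * j.factorial ≠ 0)), cpoch_one, neg_pow x]
    have hi : (i.factorial : ℂ) ≠ 0 := by exact_mod_cast i.factorial_ne_zero
    have hj : (j.factorial : ℂ) ≠ 0 := by exact_mod_cast j.factorial_ne_zero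
    have hij : ((i + j).factorial : ℂ) ≠ 0 := by exact_mod_cast (i + j).factorial_ne_zero
    have := cpoch_ne hc i
    push_cast
    field_simp
    ring
  · refine tsum_congr fun k => ?_
    have hb := ((binom_hasSum (a + k) x hx1).mul_left
      (cpoch a k * cpoch (c - b) k / (cpoch c k * k.factorial) * (-x) ^ k)).tsum_eq
    have hp : (1 - x) ^ (-a) * (x / (x - 1)) ^ k = (-x) ^ k * (1 - x) ^ (-(a + k)) := by
      rw [neg_add, Complex.cpow_add _ _ hx0, Complex.cpow_neg _ (k : ℂ), Complex.cpow_natCast,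
        show x / (x - 1) = (-x) / (1 - x) by rw [← neg_sub 1 x, div_neg, neg_div], div_pow]
      ring
    rw [mul_left_comm, hp, ← mul_assoc, ← hb]
    refine tsum_congr fun j => ?_
    have hj : (j.factorial : ℂ) ≠ 0 := by exact_mod_cast j.factorial_ne_zero
    simp only [cpoch_one, cpoch_add]
    field_simp

/-- Linear transformation for Appell's `F₂` induced by `(A,B) ↦ (1−A,1−B)`. -/
theorem statement3 (α β₁ β₂ γ₁ γ₂ : ℂ) (A B : ℝ)
    (hγ₁ : ∀ n : ℕ, γ₁ ≠ -(n : ℂ)) (hγ₂ : ∀ n : ℕ, γ₂ ≠ -(n : ℂ))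
    (hB : 2 < B) (hBA : B < A) :
    (A : ℂ) ^ (-α) *
      appellF2 α β₁ β₂ γ₁ γ₂ (1 / (A : ℂ)) (1 - (B : ℂ) / (A : ℂ)) =
    ((A : ℂ) - 1) ^ (-α) *
      appellF2 α (γ₁ - β₁) β₂ γ₁ γ₂ (1 / (1 - (A : ℂ)))
        (1 - (1 - (B : ℂ)) / (1 - (A : ℂ))) := by
  have hA0 : (A : ℂ) ≠ 0 := by exact_mod_cast (by linarith : A ≠ 0)
  have hA1 : (A : ℂ) - 1 ≠ 0 := by exact_mod_cast (by linarith : A - 1 ≠ 0)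
  have hA1' : 1 - (A : ℂ) ≠ 0 := by rw [← neg_sub]; exact neg_ne_zero.2 hA1
  set x : ℂ := 1 / (A : ℂ) with hx
  set y : ℂ := 1 - (B : ℂ) / (A : ℂ) with hy
  have hx1 : 1 - x = ((A : ℂ) - 1) / A := by rw [hx]; field_simp
  have hx0 : 1 - x ≠ 0 := by rw [hx1]; exact div_ne_zero hA1 hA0
  have ex : 1 / (1 - (A : ℂ)) = x / (x - 1) := by
    rw [← neg_sub 1 x, hx1, hx, ← neg_sub (A : ℂ) 1]; field_simp
  have ey : 1 - (1 - (B : ℂ)) / (1 - (A : ℂ)) = y / (1 - x) := by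
    rw [hx1, hy, ← neg_sub (A : ℂ) 1]; field_simp; ring
  have nx : ‖x‖ = 1 / A := by
    rw [hx, show (1 / (A : ℂ)) = ((1 / A : ℝ) : ℂ) by push_cast; rfl, Complex.norm_real,
      Real.norm_of_nonneg (by apply div_nonneg <;> linarith)]
  have ny : ‖y‖ = (A - B) / A := by
    rw [hy, show (1 - (B : ℂ) / (A : ℂ)) = (((A - B) / A : ℝ) : ℂ) by push_cast; field_simp,
      Complex.norm_real, Real.norm_of_nonneg (by apply div_nonneg <;> linarith)]
  have n1x : ‖1 - x‖ = (A - 1) / A := by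
    rw [hx1, show (((A : ℂ) - 1) / (A : ℂ)) = (((A - 1) / A : ℝ) : ℂ) by push_cast; rfl,
      Complex.norm_real, Real.norm_of_nonneg (by apply div_nonneg <;> linarith)]
  have hAp : 0 < A := by linarith
  have hA1p : 0 < A - 1 := by linarith
  have c1 : ‖x‖ + ‖y‖ < 1 := by
    rw [nx, ny, ← add_div, div_lt_one hAp]; linarith
  have c2 : ‖x / (x - 1)‖ + ‖y / (1 - x)‖ < 1 := by
    rw [norm_div x, norm_div y, norm_sub_rev x 1, nx, ny, n1x, div_div_div_cancel_right₀ hAp.ne',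
      div_div_div_cancel_right₀ hAp.ne', ← add_div, div_lt_one hA1p]; linarith
  have c3 : ‖x‖ + ‖x‖ < 1 := by
    rw [nx, ← add_div, div_lt_one hAp]; linarith
  have hpow : ((A : ℂ) - 1) ^ (-α) = (A : ℂ) ^ (-α) * (1 - x) ^ (-α) := by
    rw [hx1, show (((A : ℂ) - 1) / (A : ℂ)) = (((A - 1) / A : ℝ) : ℂ) by push_cast; rfl,
      ← Complex.mul_cpow_ofReal_nonneg hAp.le (by positivity)]
    congr 1
    push_cast
    field_simp
  rw [ex, ey, hpow, mul_assoc]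
  congr 1
  have s1 := F2_summable α β₁ β₂ γ₁ γ₂ x y hγ₁ hγ₂ c1
  have s2 := F2_summable α (γ₁ - β₁) β₂ γ₁ γ₂ (x / (x - 1)) (y / (1 - x)) hγ₁ hγ₂ c2
  have t1 := s1.prod_symm.tsum_prod' fun k => s1.prod_symm.prod_factor k
  have t2 := s2.prod_symm.tsum_prod' fun k => s2.prod_symm.prod_factor k
  have q1 := (Equiv.prodComm ℕ ℕ).tsum_eq (fun p : ℕ × ℕ =>
    cpoch α (p.1 + p.2) * cpoch β₁ p.1 * cpoch β₂ p.2 /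
    (cpoch γ₁ p.1 * cpoch γ₂ p.2 * (p.1.factorial : ℂ) * (p.2.factorial : ℂ)) *
    x ^ p.1 * y ^ p.2)
  have q2 := (Equiv.prodComm ℕ ℕ).tsum_eq (fun p : ℕ × ℕ =>
    cpoch α (p.1 + p.2) * cpoch (γ₁ - β₁) p.1 * cpoch β₂ p.2 /
    (cpoch γ₁ p.1 * cpoch γ₂ p.2 * (p.1.factorial : ℂ) * (p.2.factorial : ℂ)) *
    (x / (x - 1)) ^ p.1 * (y / (1 - x)) ^ p.2)
  refine (q1.symm.trans t1).trans (Eq.trans ?_ (congrArg _ (q2.symm.trans t2).symm))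
  rw [← tsum_mul_left]
  refine tsum_congr fun n => ?_
  have hP := congrArg (fun t => cpoch α n * cpoch β₂ n / (cpoch γ₂ n * n.factorial) * y ^ n * t)
    (pfaff (α + n) β₁ γ₁ x hγ₁ c3)
  simp only [← tsum_mul_left] at hP
  rw [← tsum_mul_left]
  refine Eq.trans (tsum_congr fun m => ?_) (hP.trans (tsum_congr fun m => ?_))
  · simp only [Prod.swap_prod_mk]
    rw [add_comm m n, cpoch_add]
    ring
  · simp only [Prod.swap_prod_mk]
    rw [add_comm m n, cpoch_add, neg_add, Complex.cpow_add _ _ hx0, Complex.cpow_neg _ (n : ℂ),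
      Complex.cpow_natCast, div_pow y]
    ring
end

section
/- (Kummer's first quadratic identity) Let β₁, β₂ be real numbers with β₁ > 0 and β₂ > 0, and let Λ be a real number with 0 < Λ < 1. Then ₂F₁(β₁+β₂−1/2, β₂; β₁+1/2; ((1−Λ)/(1+Λ))²) = ((1+Λ)/2)^{2β₁+2β₂−1} · ₂F₁(β₁+β₂−1/2, β₁; 2β₁; 1−Λ²). -/
/-- Pochhammer symbol `(x)_n` in `ℝ`. -/
noncomputable def rpoch (x : ℝ) (n : ℕ) : ℝ := (ascPochhammer ℝ n).eval x

/-- Gauss' hypergeometric series `₂F₁` (real). -/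
noncomputable def hyp2F1 (a b c z : ℝ) : ℝ :=
  ∑' n : ℕ, rpoch a n * rpoch b n / (rpoch c n * (n.factorial : ℝ)) * z ^ n

open Filter Topology

/-- The coefficients of the hypergeometric series. -/
noncomputable def hypCoeff (a b c : ℝ) (n : ℕ) : ℝ :=
  rpoch a n * rpoch b n / (rpoch c n * (n.factorial : ℝ))

lemma rpoch_succ (x : ℝ) (n : ℕ) : rpoch x (n + 1) = rpoch x n * (x + n) := by
  simp [rpoch, ascPochhammer_succ_eval]

lemma rpoch_pos (x : ℝ) (hx : 0 < x) (n : ℕ) : 0 < rpoch x n := ascPochhammer_pos n x hx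

lemma hypCoeff_succ (a b c : ℝ) (hc : 0 < c) (n : ℕ) :
    ((n : ℝ) + 1) * (n + c) * hypCoeff a b c (n + 1) = (n + a) * (n + b) * hypCoeff a b c n := by
  have h1 := (rpoch_pos c hc n).ne'
  have h2 : c + (n : ℝ) ≠ 0 := by positivity
  have h3 : (n.factorial : ℝ) ≠ 0 := by positivity
  have h4 : (n : ℝ) + 1 ≠ 0 := by positivity
  simp only [hypCoeff, rpoch_succ, Nat.factorial_succ]
  push_cast
  field_simp
  ring

lemma hypCoeff_summable (a b c : ℝ) (hc : 0 < c) (z : ℝ) (hz : |z| < 1) :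
    Summable fun n => hypCoeff a b c n * z ^ n := by
  have hr : (1 + |z|) / 2 < 1 := by linarith
  refine summable_of_ratio_norm_eventually_le hr ?_
  have ht : Tendsto (fun n : ℕ => |((n : ℝ) + a) / (n + 1) * ((n + b) / (n + c))| * |z|) atTop
      (𝓝 (|1 * 1| * |z|)) := by
    refine Tendsto.mul_const _ (Tendsto.abs (Tendsto.mul ?_ ?_))
    · simpa using tendsto_add_mul_div_add_mul_atTop_nhds a 1 (1 : ℝ) (d := 1) one_ne_zero |>.congr
        (fun n => by rw [one_mul, add_comm a, add_comm (1:ℝ)])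
    · simpa using tendsto_add_mul_div_add_mul_atTop_nhds b c (1 : ℝ) (d := 1) one_ne_zero |>.congr
        (fun n => by rw [one_mul, add_comm b, add_comm c])
  have hlt : |(1:ℝ) * 1| * |z| < (1 + |z|) / 2 := by simp; linarith
  filter_upwards [ht.eventually_lt_const hlt] with n hn
  have hrec : hypCoeff a b c (n + 1)
      = ((n : ℝ) + a) / (n + 1) * ((n + b) / (n + c)) * hypCoeff a b c n := by
    have h2 : (n : ℝ) + c ≠ 0 := by positivity
    have h4 : (n : ℝ) + 1 ≠ 0 := by positivity
    have := hypCoeff_succ a b c hc n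
    field_simp
    linarith
  rw [hrec, pow_succ]
  simp only [norm_mul, Real.norm_eq_abs]
  rw [abs_mul] at hn
  calc _ = (|((n : ℝ) + a) / (n + 1)| * |(n + b) / (n + c)| * |z|) *
        (|hypCoeff a b c n| * |z ^ n|) := by ring
    _ ≤ _ := by gcongr

lemma ps_hasFPS (u : ℕ → ℝ) (hs : ∀ z : ℝ, |z| < 1 → Summable fun n => u n * z ^ n) :
    HasFPowerSeriesOnBall (fun z => ∑' n, u n * z ^ n)
      (FormalMultilinearSeries.ofScalars ℝ u) 0 1 := by
  refine ⟨?_, by simp, ?_⟩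
  · refine ENNReal.le_of_forall_nnreal_lt fun r hr => ?_
    have hr' : (r : ℝ) < 1 := by exact_mod_cast hr
    refine FormalMultilinearSeries.le_radius_of_summable _ ?_
    have := (hs r (by simpa using hr')).norm
    refine this.congr fun n => ?_
    simp
  · intro y hy
    have hy' : |y| < 1 := by simpa [Metric.mem_eball, edist_dist, dist_eq_norm] using hy
    have := (hs y hy').hasSum
    simpa [FormalMultilinearSeries.ofScalars_apply_eq, mul_comm] using this

lemma ps_analytic (u : ℕ → ℝ) (hs : ∀ z : ℝ, |z| < 1 → Summable fun n => u n * z ^ n)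
    (z : ℝ) (hz : |z| < 1) : AnalyticAt ℝ (fun z => ∑' n, u n * z ^ n) z := by
  refine (ps_hasFPS u hs).analyticAt_of_mem ?_
  simpa [Metric.mem_eball, edist_dist, dist_eq_norm] using hz

lemma ps_deriv (u : ℕ → ℝ) (hs : ∀ z : ℝ, |z| < 1 → Summable fun n => u n * z ^ n)
    (z : ℝ) (hz : |z| < 1) :
    HasSum (fun n : ℕ => (((n : ℝ) + 1) * u (n + 1)) * z ^ n)
      (deriv (fun z => ∑' n, u n * z ^ n) z) := by
  have hz' : z ∈ Metric.eball (0:ℝ) 1 := by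
    simpa [Metric.mem_eball, edist_dist, dist_eq_norm] using hz
  have h := (ps_hasFPS u hs).fderiv.hasSum hz'
  have h2 := (ContinuousLinearMap.apply ℝ ℝ (1:ℝ)).hasSum h
  simp only [zero_add, ContinuousLinearMap.apply_apply, fderiv_apply_one_eq_deriv] at h2
  convert! h2 using 2 with n
  have h3 := FormalMultilinearSeries.derivSeries_coeff_one
    (FormalMultilinearSeries.ofScalars ℝ u) n
  rw [FormalMultilinearSeries.apply_eq_pow_smul_coeff]
  simp only [ContinuousLinearMap.smul_apply, h3, FormalMultilinearSeries.coeff_ofScalars]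
  simp
  ring

lemma ps_ode (a b c : ℝ) (hc : 0 < c) :
    ∃ f1 f2 : ℝ → ℝ, ∀ z : ℝ, |z| < 1 →
      HasDerivAt (hyp2F1 a b c) (f1 z) z ∧ HasDerivAt f1 (f2 z) z ∧
      z * (1 - z) * f2 z + (c - (a + b + 1) * z) * f1 z - a * b * hyp2F1 a b c z = 0 := by
  set u := hypCoeff a b c with hu
  have hs := hypCoeff_summable a b c hc
  rw [← hu] at hs
  have hF : hyp2F1 a b c = fun z => ∑' n, u n * z ^ n := rfl
  set v : ℕ → ℝ := fun n => ((n : ℝ) + 1) * u (n + 1) with hv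
  have hsv : ∀ z : ℝ, |z| < 1 → Summable fun n => v n * z ^ n :=
    fun z hz => (ps_deriv u hs z hz).summable
  refine ⟨fun z => ∑' n, v n * z ^ n, deriv (fun z => ∑' n, v n * z ^ n), fun z hz => ?_⟩
  have d1 := ps_deriv u hs z hz
  have d2 := ps_deriv v hsv z hz
  rw [hF]
  refine ⟨?_, (ps_analytic v hsv z hz).differentiableAt.hasDerivAt, ?_⟩
  · have := (ps_analytic u hs z hz).differentiableAt.hasDerivAt
    rwa [← d1.tsum_eq] at this
  set g2 := deriv (fun z => ∑' n, v n * z ^ n) z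
  have s0 := (hs z hz).hasSum
  have s1 := (hsv z hz).hasSum
  set g1 := ∑' n, v n * z ^ n
  set g0 := ∑' n, u n * z ^ n
  have t1 : HasSum (fun n : ℕ => (n : ℝ) * u n * z ^ n) (z * g1) := by
    rw [← hasSum_nat_add_iff' 1]
    simp only [Finset.sum_range_one, Nat.cast_zero, zero_mul, sub_zero]
    convert! s1.mul_left z using 2 with n
    simp only [hv]
    push_cast
    ring
  have t2 : HasSum (fun n : ℕ => (n : ℝ) * v n * z ^ n) (z * g2) := by
    rw [← hasSum_nat_add_iff' 1]
    simp only [Finset.sum_range_one, Nat.cast_zero, zero_mul, sub_zero]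
    convert! d2.mul_left z using 2 with n
    push_cast
    ring
  have t3 : HasSum (fun n : ℕ => (n : ℝ) * (n - 1) * u n * z ^ n) (z * (z * g2)) := by
    rw [← hasSum_nat_add_iff' 1]
    simp only [Finset.sum_range_one, Nat.cast_zero, zero_mul, sub_zero]
    convert! t2.mul_left z using 2 with n
    simp only [hv]
    push_cast
    ring
  have key := (((t2.add (s1.mul_left c)).sub t3).sub (t1.mul_left (a + b + 1))).sub
    (s0.mul_left (a * b))
  have : (fun n : ℕ => (n : ℝ) * v n * z ^ n + c * (v n * z ^ n) - (n : ℝ) * (n - 1) * u n * z ^ n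
     - (a + b + 1) * ((n : ℝ) * u n * z ^ n) - a * b * (u n * z ^ n)) = fun _ => 0 := by
    funext n
    have := hypCoeff_succ a b c hc n
    rw [← hu] at this
    simp only [hv]
    linear_combination z ^ n * this
  rw [this] at key
  have := key.unique hasSum_zero
  linear_combination this

lemma ode_unique (D D1 D2 q r : ℝ → ℝ) (hD : AnalyticAt ℝ D 0) (h0 : D 0 = 0)
    (h1 : ∀ᶠ x in 𝓝 0, HasDerivAt D (D1 x) x) (h2 : ∀ᶠ x in 𝓝 0, HasDerivAt D1 (D2 x) x)
    (hq : ContinuousAt q 0) (hr : ContinuousAt r 0) (hq0 : 0 < q 0)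
    (hode : ∀ᶠ x in 𝓝 (0:ℝ), x * (1 - x ^ 2) * D2 x + q x * D1 x + r x * D x = 0) :
    ∀ᶠ x in 𝓝 0, D x = 0 := by
  by_contra hne
  obtain ⟨k, E, hE, hE0, hDE⟩ := hD.exists_eventuallyEq_pow_smul_nonzero_iff.mpr hne
  simp only [sub_zero, smul_eq_mul] at hDE
  obtain _ | m := k
  · have := hDE.self_of_nhds
    simp [h0] at this
    exact hE0 this.symm
  have e1 : D1 =ᶠ[𝓝 0] fun x => (m + 1) * x ^ m * E x + x ^ (m + 1) * deriv E x := by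
    filter_upwards [h1, hDE.eventually_nhds, hE.eventually_analyticAt] with x hx hx2 hx3
    have h := (hasDerivAt_pow (m + 1) x).mul hx3.differentiableAt.hasDerivAt
    have h' := h.congr_of_eventuallyEq (f₁ := D) hx2
    rw [hx.unique h']
    simp
  have e2 : ∀ᶠ x in 𝓝 0, x * D2 x = (m + 1) * m * x ^ m * E x
      + 2 * (m + 1) * x ^ m * (x * deriv E x) + x ^ m * (x ^ 2 * deriv (deriv E) x) := by
    filter_upwards [h2, e1.eventually_nhds, hE.eventually_analyticAt] with x hx hx2 hx3
    have d0 := hx3.differentiableAt.hasDerivAt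
    have d1 := hx3.deriv.differentiableAt.hasDerivAt
    have h := (((hasDerivAt_pow m x).const_mul ((m:ℝ) + 1)).mul d0).add
      ((hasDerivAt_pow (m + 1) x).mul d1)
    have h' := h.congr_of_eventuallyEq (f₁ := D1) hx2
    rw [hx.unique h']
    obtain _ | j := m
    · simp; ring
    · simp; ring
  set B : ℝ → ℝ := fun x => (1 - x ^ 2) * ((m + 1) * m * E x
      + 2 * (m + 1) * (x * deriv E x) + (x ^ 2 * deriv (deriv E) x))
      + q x * ((m + 1) * E x + x * deriv E x) + r x * (x * E x) with hB
  have hBz : ∀ᶠ x in 𝓝[≠] 0, B x = 0 := by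
    filter_upwards [hode.filter_mono nhdsWithin_le_nhds, e1.filter_mono nhdsWithin_le_nhds,
      e2.filter_mono nhdsWithin_le_nhds, hDE.filter_mono nhdsWithin_le_nhds,
      self_mem_nhdsWithin] with x o a1 a2 a0 hx
    have hx' : x ^ m ≠ 0 := pow_ne_zero _ hx
    apply mul_left_cancel₀ hx'
    rw [a1, a0] at o
    simp only [hB]
    linear_combination o - (1 - x ^ 2) * a2
  have hc0 := hE.continuousAt
  have hc1 := hE.deriv.continuousAt
  have hc2 := hE.deriv.deriv.continuousAt
  have hBc : ContinuousAt B 0 := by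
    simp only [hB]
    fun_prop
  have hB0 : B 0 = 0 := by
    refine tendsto_nhds_unique (hBc.tendsto.mono_left (nhdsWithin_le_nhds (s := {0}ᶜ))) ?_
    exact tendsto_const_nhds.congr' (by filter_upwards [hBz] with x hx using hx.symm)
  simp [hB] at hB0
  have : ((m:ℝ) + 1) * (m + q 0) * E 0 = 0 := by linarith
  have : ((m:ℝ) + 1) * (m + q 0) ≠ 0 := by positivity
  simp_all

lemma hyp_analytic (a b c : ℝ) (hc : 0 < c) (z : ℝ) (hz : |z| < 1) :
    AnalyticAt ℝ (hyp2F1 a b c) z :=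
  ps_analytic (hypCoeff a b c) (hypCoeff_summable a b c hc) z hz

lemma hyp_zero (a b c : ℝ) : hyp2F1 a b c 0 = 1 := by
  unfold hyp2F1
  rw [tsum_eq_single 0]
  · simp [rpoch]
  · intro n hn
    simp [hn]

lemma w_bound (x : ℝ) (hx : x ∈ Set.Ioo (-1 / 10 : ℝ) 1) : |4 * x / (1 + x) ^ 2| < 1 := by
  obtain ⟨h1, h2⟩ := hx
  have h3 : 0 < 1 + x := by linarith
  rw [abs_lt]
  constructor
  · rw [lt_div_iff₀ (by positivity)]; nlinarith
  · rw [div_lt_one (by positivity)]; nlinarith [mul_pos (sub_pos.2 h2) (sub_pos.2 h2)]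

lemma sq_bound (x : ℝ) (hx : x ∈ Set.Ioo (-1 / 10 : ℝ) 1) : |x ^ 2| < 1 := by
  obtain ⟨h1, h2⟩ := hx
  rw [abs_lt]
  constructor <;> nlinarith

lemma pw_deriv (a x : ℝ) (hx : 0 < 1 + x) :
    HasDerivAt (fun x : ℝ => (1 + x) ^ (-2 * a)) (-2 * a / (1 + x) * (1 + x) ^ (-2 * a)) x := by
  have h := ((hasDerivAt_id x).const_add 1).rpow_const (p := -2 * a) (Or.inl hx.ne')
  convert! h using 1
  rw [id, Real.rpow_sub_one hx.ne']
  ring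

lemma kummer_analytic (a b : ℝ) (hb : 0 < b) :
    AnalyticOnNhd ℝ (fun x => (1 + x) ^ (-2 * a) * hyp2F1 a b (2 * b) (4 * x / (1 + x) ^ 2))
      (Set.Ioo (-1 / 10) 1) := by
  intro x hx
  have h3 : 0 < 1 + x := by linarith [hx.1]
  have hl : AnalyticAt ℝ (fun x : ℝ => 1 + x) x := by fun_prop
  refine AnalyticAt.mul ?_ ?_
  · have h5 : AnalyticAt ℝ (fun x : ℝ => Real.exp (Real.log (1 + x) * (-2 * a))) x :=
      ((hl.log h3).mul analyticAt_const).rexp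
    refine h5.congr ?_
    filter_upwards [hl.continuousAt.tendsto.eventually_const_lt h3] with y hy
    rw [Real.rpow_def_of_pos hy]
  · have hw : AnalyticAt ℝ (fun x : ℝ => 4 * x / (1 + x) ^ 2) x :=
      AnalyticAt.div (by fun_prop) (by fun_prop) (by positivity)
    exact (hyp_analytic a b (2 * b) (by positivity) _ (w_bound x hx)).comp_of_eq hw rfl

lemma kummer_analytic_left (a b : ℝ) (hb : 0 < b) :
    AnalyticOnNhd ℝ (fun x => hyp2F1 a (a - b + 1 / 2) (b + 1 / 2) (x ^ 2))
      (Set.Ioo (-1 / 10) 1) := by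
  intro x hx
  have hw : AnalyticAt ℝ (fun x : ℝ => x ^ 2) x := by fun_prop
  exact (hyp_analytic a (a - b + 1 / 2) (b + 1 / 2) (by positivity) _ (sq_bound x hx)).comp_of_eq hw rfl

lemma kummer_local (a b : ℝ) (hb : 0 < b) :
    ∀ᶠ x in 𝓝 (0:ℝ), hyp2F1 a (a - b + 1 / 2) (b + 1 / 2) (x ^ 2) -
      (1 + x) ^ (-2 * a) * hyp2F1 a b (2 * b) (4 * x / (1 + x) ^ 2) = 0 := by
  obtain ⟨f1, f2, hf⟩ := ps_ode a (a - b + 1 / 2) (b + 1 / 2) (by positivity)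
  obtain ⟨g1, g2, hg⟩ := ps_ode a b (2 * b) (by positivity)
  have h0m : (0:ℝ) ∈ Set.Ioo (-1 / 10 : ℝ) 1 := by constructor <;> norm_num
  have hU : Set.Ioo (-1 / 10 : ℝ) 1 ∈ 𝓝 (0:ℝ) := isOpen_Ioo.mem_nhds h0m
  set f0 := hyp2F1 a (a - b + 1 / 2) (b + 1 / 2)
  set g0 := hyp2F1 a b (2 * b)
  let G1 : ℝ → ℝ := fun x => (1 + x) ^ (-2 * a) * (-2 * a / (1 + x) * g0 (4 * x / (1 + x) ^ 2) +
    4 * (1 - x) / (1 + x) ^ 3 * g1 (4 * x / (1 + x) ^ 2))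
  let G2 : ℝ → ℝ := fun x => (1 + x) ^ (-2 * a) * (
    -2 * a / (1 + x) * (-2 * a / (1 + x) * g0 (4 * x / (1 + x) ^ 2) +
      4 * (1 - x) / (1 + x) ^ 3 * g1 (4 * x / (1 + x) ^ 2)) +
    (2 * a / (1 + x) ^ 2 * g0 (4 * x / (1 + x) ^ 2)
      + -2 * a / (1 + x) * (4 * (1 - x) / (1 + x) ^ 3 * g1 (4 * x / (1 + x) ^ 2))
      + (8 * x - 16) / (1 + x) ^ 4 * g1 (4 * x / (1 + x) ^ 2)
      + (4 * (1 - x) / (1 + x) ^ 3) ^ 2 * g2 (4 * x / (1 + x) ^ 2)))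
  refine ode_unique _ (fun x => 2 * x * f1 (x ^ 2) - G1 x)
    (fun x => 2 * f1 (x ^ 2) + 4 * x ^ 2 * f2 (x ^ 2) - G2 x)
    (fun x => 2 * b - (4 * a - 2 * b + 2) * x ^ 2)
    (fun x => -4 * a * (a - b + 1 / 2) * x)
    ((kummer_analytic_left a b hb 0 h0m).sub (kummer_analytic a b hb 0 h0m)) ?_ ?_ ?_
    (by fun_prop) (by fun_prop) (by simpa using hb) ?_
  · simp [f0, g0, hyp_zero]
  · filter_upwards [hU] with x hx
    have h3 : 0 < 1 + x := by linarith [hx.1]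
    have hsq : HasDerivAt (fun x : ℝ => x ^ 2) (2 * x) x := by simpa using hasDerivAt_pow 2 x
    have hw : HasDerivAt (fun x : ℝ => 4 * x / (1 + x) ^ 2) (4 * (1 - x) / (1 + x) ^ 3) x := by
      convert! ((hasDerivAt_id x).const_mul 4).div (((hasDerivAt_id x).const_add 1).pow 2)
        (by simpa using h3.ne') using 1
      simp
      field_simp
      ring
    have hL := (hf _ (sq_bound x hx)).1.comp_of_eq x hsq rfl
    have hR := (pw_deriv a x h3).mul ((hg _ (w_bound x hx)).1.comp_of_eq x hw rfl)
    convert! hL.sub hR using 1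
    simp only [G1, Function.comp_apply]
    ring
  · filter_upwards [hU] with x hx
    have h3 : 0 < 1 + x := by linarith [hx.1]
    have hsq : HasDerivAt (fun x : ℝ => x ^ 2) (2 * x) x := by simpa using hasDerivAt_pow 2 x
    have hw : HasDerivAt (fun x : ℝ => 4 * x / (1 + x) ^ 2) (4 * (1 - x) / (1 + x) ^ 3) x := by
      convert! ((hasDerivAt_id x).const_mul 4).div (((hasDerivAt_id x).const_add 1).pow 2)
        (by simpa using h3.ne') using 1
      simp
      field_simp
      ring
    have hw1 : HasDerivAt (fun x : ℝ => 4 * (1 - x) / (1 + x) ^ 3)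
        ((8 * x - 16) / (1 + x) ^ 4) x := by
      convert! (((hasDerivAt_id x).const_sub 1).const_mul 4).div
        (((hasDerivAt_id x).const_add 1).pow 3) (by simpa using h3.ne') using 1
      simp
      field_simp
      ring
    have hi : HasDerivAt (fun x : ℝ => -2 * a / (1 + x)) (2 * a / (1 + x) ^ 2) x := by
      convert! (hasDerivAt_const x (-2 * a)).div ((hasDerivAt_id x).const_add 1)
        (by simpa using h3.ne') using 1
      simp
    have hL := ((hasDerivAt_id x).const_mul 2).mul ((hf _ (sq_bound x hx)).2.1.comp_of_eq x hsq rfl)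
    have hR := (pw_deriv a x h3).mul ((hi.mul ((hg _ (w_bound x hx)).1.comp_of_eq x hw rfl)).add
      (hw1.mul ((hg _ (w_bound x hx)).2.1.comp_of_eq x hw rfl)))
    convert! hL.sub hR using 1
    simp only [G2, Function.comp_apply, Pi.mul_apply, Pi.add_apply, id]
    ring
  · filter_upwards [hU] with x hx
    have h3 : 0 < 1 + x := by linarith [hx.1]
    have hL := (hf _ (sq_bound x hx)).2.2
    have hR := (hg _ (w_bound x hx)).2.2
    simp only [G1, G2]
    generalize (1 + x) ^ (-2 * a) = P
    generalize f0 (x ^ 2) = F0 at *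
    generalize f1 (x ^ 2) = F1 at *
    generalize f2 (x ^ 2) = F2 at *
    generalize g0 (4 * x / (1 + x) ^ 2) = H0 at *
    generalize g1 (4 * x / (1 + x) ^ 2) = H1 at *
    generalize g2 (4 * x / (1 + x) ^ 2) = H2 at *
    have e : 4 * x * (x ^ 2 * (1 - x ^ 2) * F2 + (b + 1 / 2 - (a + (a - b + 1 / 2) + 1) * x ^ 2) * F1
      - a * (a - b + 1 / 2) * F0) - P * (4 * (1 - x) / (1 + x)) *
      (4 * x / (1 + x) ^ 2 * (1 - 4 * x / (1 + x) ^ 2) * H2 +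
        (2 * b - (a + b + 1) * (4 * x / (1 + x) ^ 2)) * H1 - a * b * H0) = 0 := by
      rw [hL, hR]; ring
    rw [← e]
    field_simp
    ring

lemma kummer (a b : ℝ) (hb : 0 < b) (x : ℝ) (hx : x ∈ Set.Ioo (-1 / 10 : ℝ) 1) :
    hyp2F1 a (a - b + 1 / 2) (b + 1 / 2) (x ^ 2) =
      (1 + x) ^ (-2 * a) * hyp2F1 a b (2 * b) (4 * x / (1 + x) ^ 2) := by
  have h0m : (0:ℝ) ∈ Set.Ioo (-1 / 10 : ℝ) 1 := by constructor <;> norm_num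
  refine (kummer_analytic_left a b hb).eqOn_of_preconnected_of_eventuallyEq
    (kummer_analytic a b hb) isPreconnected_Ioo h0m ?_ hx
  filter_upwards [kummer_local a b hb] with x hx using sub_eq_zero.1 hx

/-- Kummer's first quadratic identity. -/
theorem statement5 (β₁ β₂ Λ : ℝ) (hβ₁ : 0 < β₁) (hβ₂ : 0 < β₂)
    (hΛ0 : 0 < Λ) (hΛ1 : Λ < 1) :
    hyp2F1 (β₁ + β₂ - 1 / 2) β₂ (β₁ + 1 / 2) (((1 - Λ) / (1 + Λ)) ^ 2) =
      ((1 + Λ) / 2) ^ (2 * β₁ + 2 * β₂ - 1) *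
      hyp2F1 (β₁ + β₂ - 1 / 2) β₁ (2 * β₁) (1 - Λ ^ 2) := by
  have h1 : 0 < 1 + Λ := by linarith
  have hx : (1 - Λ) / (1 + Λ) ∈ Set.Ioo (-1 / 10 : ℝ) 1 := by
    constructor
    · have : 0 < (1 - Λ) / (1 + Λ) := div_pos (by linarith) h1
      linarith
    · rw [div_lt_one h1]; linarith
  have h := kummer (β₁ + β₂ - 1 / 2) β₁ hβ₁ _ hx
  have e1 : β₁ + β₂ - 1 / 2 - β₁ + 1 / 2 = β₂ := by ring
  have e2 : 1 + (1 - Λ) / (1 + Λ) = ((1 + Λ) / 2)⁻¹ := by field_simp; ring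
  have e3 : 4 * ((1 - Λ) / (1 + Λ)) / ((1 + Λ) / 2)⁻¹ ^ 2 = 1 - Λ ^ 2 := by field_simp; ring
  have e4 : -2 * (β₁ + β₂ - 1 / 2) = -(2 * β₁ + 2 * β₂ - 1) := by ring
  rw [e1, e2, e3, e4, Real.inv_rpow (by positivity), Real.rpow_neg (by positivity), inv_inv] at h
  exact h
end

section
/- (Generalized fibration 𝔍₅) Let r, p be positive integers with r/2 < p < 3r/2 and set q = 3r − 2p. Let Λ₁, Λ₂, ζ₁, ζ₂, η₁, η₂ be complex numbers with Λ₁ ≠ 0, Λ₁² ≠ 1, Λ₂² ≠ 1, ζ₁ ≠ 0, Λ₂²ζ₁ − ζ₂ ≠ 0, ζ₁ + (Λ₁²−1)ζ₂ − Λ₁² ≠ 0, satisfying η₁^{2r} = ζ₁^{2r−p}(ζ₁−1)^{2r−p}(ζ₁−Λ₁²)^{2r−p} and η₂^{2r} = ζ₂^{p}(ζ₂−1)^{p}(ζ₂−Λ₂²)^{p}. Define U = (ζ₁−ζ₂)(Λ₂²ζ₁+(Λ₁²−1)ζ₂−Λ₁²Λ₂²) / ((Λ₂²ζ₁−ζ₂)(ζ₁+(Λ₁²−1)ζ₂−Λ₁²)),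 R = Λ₁²(Λ₂²−1)(U−1)(U−1+Λ₁²(1−Λ₂²))((Λ₁²Λ₂²−Λ₁²−Λ₂²)U+Λ₂²), X = R(ζ₁−ζ₂)(ζ₁−Λ₁²) / (ζ₁(ζ₁+(Λ₁²−1)ζ₂−Λ₁²)), Y = R·Λ₁²(1−Λ₁²)(U−1)ζ₂(ζ₁−ζ₂)η₁η₂ / (ζ₁²(Λ₂²ζ₁−ζ₂)(ζ₁+(Λ₁²−1)ζ₂−Λ₁²)²). If moreover U ≠ 1 whenever p > r, then Y^{2r} = Λ₁^{−4p} (1−Λ₁²)^{2(r−p)} (1−Λ₂²)^{−2r} (U−1)^{4(r−p)} X^{2r−p} · (X + Λ₁²(Λ₂²−1)(U−1)((Λ₁²Λ₂²−1)U−Λ₁²+1)((Λ₁²Λ₂²−Λ₁²−Λ₂²)U+Λ₂²))^{p} · (X + Λ₁²(Λ₂²−1)U(U−1)(U−1+Λ₁²(1−Λ₂²))((1−Λ₁²)Λ₂²U+Λ₁²−Λ₂²))^{p}, where powers with negative integer exponents denote the corresponding inverses in ℂ. -/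
/-- Factorization of `U - 1`. -/
lemma aux_w (a b x y U : ℂ) (h1 : b * x - y ≠ 0) (h2 : x + (a - 1) * y - a ≠ 0)
    (hU : U = (x - y) * (b * x + (a - 1) * y - a * b) /
      ((b * x - y) * (x + (a - 1) * y - a))) :
    U - 1 = a * (1 - b) * y * (x - 1) / ((b * x - y) * (x + (a - 1) * y - a)) := by
  rw [hU, eq_div_iff (mul_ne_zero h1 h2), sub_mul, div_mul_cancel₀ _ (mul_ne_zero h1 h2)]
  ring

/-- The second factor. -/
lemma aux_e (a b x y U : ℂ) (hx : x ≠ 0) (h1 : b * x - y ≠ 0) (h2 : x + (a - 1) * y - a ≠ 0)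
    (hU : U = (x - y) * (b * x + (a - 1) * y - a * b) /
      ((b * x - y) * (x + (a - 1) * y - a))) :
    (U - 1 + a * (1 - b)) * ((x - y) * (x - a) / (x * (x + (a - 1) * y - a))) +
      ((a * b - 1) * U - a + 1) =
    a ^ 2 * (a - 1) * (1 - b) * y ^ 2 * (x - 1) * (y - 1) /
      (x * (b * x - y) * (x + (a - 1) * y - a) ^ 2) := by
  rw [hU]
  generalize hD1 : b * x - y = D1 at *
  generalize hD2 : x + (a - 1) * y - a = D2 at *
  field_simp
  subst hD1 hD2
  ring

/-- The third factor. -/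
lemma aux_f (a b x y U : ℂ) (hx : x ≠ 0) (h1 : b * x - y ≠ 0) (h2 : x + (a - 1) * y - a ≠ 0)
    (hU : U = (x - y) * (b * x + (a - 1) * y - a * b) /
      ((b * x - y) * (x + (a - 1) * y - a))) :
    ((a * b - a - b) * U + b) * ((x - y) * (x - a) / (x * (x + (a - 1) * y - a))) +
      U * ((1 - a) * b * U + a - b) =
    - (a ^ 2 * (a - 1) * (1 - b) * y ^ 2 * (x - 1) * (x - y) * (y - b)) /
      (x * (b * x - y) ^ 2 * (x + (a - 1) * y - a) ^ 2) := by
  rw [hU]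
  generalize hD1 : b * x - y = D1 at *
  generalize hD2 : x + (a - 1) * y - a = D2 at *
  field_simp
  subst hD1 hD2
  ring


/-- Generalized fibration `𝔍₅` on the generalized Kummer variety
`S₀^{(r,p,q=3r−2p)}(Λ₁², Λ₂²)`. -/
theorem statement13 (r p q : ℕ) (hr : 0 < r) (hp0 : 0 < p)
    (hp1 : r < 2 * p) (hp2 : 2 * p < 3 * r) (hq : q = 3 * r - 2 * p)
    (Λ₁ Λ₂ ζ₁ ζ₂ η₁ η₂ : ℂ)
    (hΛ₁0 : Λ₁ ≠ 0) (hΛ₁1 : Λ₁ ^ 2 ≠ 1) (hΛ₂1 : Λ₂ ^ 2 ≠ 1)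
    (hζ₁0 : ζ₁ ≠ 0) (hden1 : Λ₂ ^ 2 * ζ₁ - ζ₂ ≠ 0)
    (hden2 : ζ₁ + (Λ₁ ^ 2 - 1) * ζ₂ - Λ₁ ^ 2 ≠ 0)
    (hcurve1 : η₁ ^ (2 * r) =
      ζ₁ ^ (2 * r - p) * (ζ₁ - 1) ^ (2 * r - p) * (ζ₁ - Λ₁ ^ 2) ^ (2 * r - p))
    (hcurve2 : η₂ ^ (2 * r) =
      ζ₂ ^ p * (ζ₂ - 1) ^ p * (ζ₂ - Λ₂ ^ 2) ^ p)
    (U R X Y : ℂ)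
    (hU : U = (ζ₁ - ζ₂) * (Λ₂ ^ 2 * ζ₁ + (Λ₁ ^ 2 - 1) * ζ₂ - Λ₁ ^ 2 * Λ₂ ^ 2) /
      ((Λ₂ ^ 2 * ζ₁ - ζ₂) * (ζ₁ + (Λ₁ ^ 2 - 1) * ζ₂ - Λ₁ ^ 2)))
    (hR : R = Λ₁ ^ 2 * (Λ₂ ^ 2 - 1) * (U - 1) * (U - 1 + Λ₁ ^ 2 * (1 - Λ₂ ^ 2)) *
      ((Λ₁ ^ 2 * Λ₂ ^ 2 - Λ₁ ^ 2 - Λ₂ ^ 2) * U + Λ₂ ^ 2))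
    (hX : X = R * (ζ₁ - ζ₂) * (ζ₁ - Λ₁ ^ 2) /
      (ζ₁ * (ζ₁ + (Λ₁ ^ 2 - 1) * ζ₂ - Λ₁ ^ 2)))
    (hY : Y = R * Λ₁ ^ 2 * (1 - Λ₁ ^ 2) * (U - 1) * ζ₂ * (ζ₁ - ζ₂) * η₁ * η₂ /
      (ζ₁ ^ 2 * (Λ₂ ^ 2 * ζ₁ - ζ₂) * (ζ₁ + (Λ₁ ^ 2 - 1) * ζ₂ - Λ₁ ^ 2) ^ 2))
    (hU1 : r < p → U ≠ 1) :
    Y ^ (2 * r) =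
      Λ₁ ^ (-(4 * (p : ℤ))) * (1 - Λ₁ ^ 2) ^ (2 * ((r : ℤ) - (p : ℤ))) *
      (1 - Λ₂ ^ 2) ^ (-(2 * (r : ℤ))) * (U - 1) ^ (4 * ((r : ℤ) - (p : ℤ))) *
      X ^ (2 * r - p) *
      (X + Λ₁ ^ 2 * (Λ₂ ^ 2 - 1) * (U - 1) * ((Λ₁ ^ 2 * Λ₂ ^ 2 - 1) * U - Λ₁ ^ 2 + 1) *
        ((Λ₁ ^ 2 * Λ₂ ^ 2 - Λ₁ ^ 2 - Λ₂ ^ 2) * U + Λ₂ ^ 2)) ^ p *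
      (X + Λ₁ ^ 2 * (Λ₂ ^ 2 - 1) * U * (U - 1) * (U - 1 + Λ₁ ^ 2 * (1 - Λ₂ ^ 2)) *
        ((1 - Λ₁ ^ 2) * Λ₂ ^ 2 * U + Λ₁ ^ 2 - Λ₂ ^ 2)) ^ p := by
  have hw := aux_w (Λ₁ ^ 2) (Λ₂ ^ 2) ζ₁ ζ₂ U hden1 hden2 hU
  have he := aux_e (Λ₁ ^ 2) (Λ₂ ^ 2) ζ₁ ζ₂ U hζ₁0 hden1 hden2 hU
  have hf := aux_f (Λ₁ ^ 2) (Λ₂ ^ 2) ζ₁ ζ₂ U hζ₁0 hden1 hden2 hU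
  have hm : 2 * r - p ≠ 0 := by omega
  by_cases hw0 : U - 1 = 0
  · have hR0 : R = 0 := by rw [hR, hw0]; ring
    have hX0 : X = 0 := by rw [hX, hR0]; simp
    have hY0 : Y = 0 := by rw [hY, hR0]; simp
    rw [hX0, hY0, zero_pow hm, zero_pow (by omega)]
    ring
  have ha : (1 : ℂ) - Λ₁ ^ 2 ≠ 0 := sub_ne_zero.mpr (Ne.symm hΛ₁1)
  have hb : (1 : ℂ) - Λ₂ ^ 2 ≠ 0 := sub_ne_zero.mpr (Ne.symm hΛ₂1)
  have hE : X + Λ₁ ^ 2 * (Λ₂ ^ 2 - 1) * (U - 1) * ((Λ₁ ^ 2 * Λ₂ ^ 2 - 1) * U - Λ₁ ^ 2 + 1) *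
        ((Λ₁ ^ 2 * Λ₂ ^ 2 - Λ₁ ^ 2 - Λ₂ ^ 2) * U + Λ₂ ^ 2) =
      Λ₁ ^ 2 * (Λ₂ ^ 2 - 1) * (U - 1) * ((Λ₁ ^ 2 * Λ₂ ^ 2 - Λ₁ ^ 2 - Λ₂ ^ 2) * U + Λ₂ ^ 2) *
      ((Λ₁ ^ 2) ^ 2 * (Λ₁ ^ 2 - 1) * (1 - Λ₂ ^ 2) * ζ₂ ^ 2 * (ζ₁ - 1) * (ζ₂ - 1) /
      (ζ₁ * (Λ₂ ^ 2 * ζ₁ - ζ₂) * (ζ₁ + (Λ₁ ^ 2 - 1) * ζ₂ - Λ₁ ^ 2) ^ 2)) := by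
    rw [← he, hX, hR]
    ring
  have hF : X + Λ₁ ^ 2 * (Λ₂ ^ 2 - 1) * U * (U - 1) * (U - 1 + Λ₁ ^ 2 * (1 - Λ₂ ^ 2)) *
        ((1 - Λ₁ ^ 2) * Λ₂ ^ 2 * U + Λ₁ ^ 2 - Λ₂ ^ 2) =
      Λ₁ ^ 2 * (Λ₂ ^ 2 - 1) * (U - 1) * (U - 1 + Λ₁ ^ 2 * (1 - Λ₂ ^ 2)) *
      (- ((Λ₁ ^ 2) ^ 2 * (Λ₁ ^ 2 - 1) * (1 - Λ₂ ^ 2) * ζ₂ ^ 2 * (ζ₁ - 1) * (ζ₁ - ζ₂) *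
        (ζ₂ - Λ₂ ^ 2)) /
      (ζ₁ * (Λ₂ ^ 2 * ζ₁ - ζ₂) ^ 2 * (ζ₁ + (Λ₁ ^ 2 - 1) * ζ₂ - Λ₁ ^ 2) ^ 2)) := by
    rw [← hf, hX, hR]
    ring
  rw [hE, hF]
  clear hE hF he hf
  generalize hL1 : U - 1 + Λ₁ ^ 2 * (1 - Λ₂ ^ 2) = L1 at *
  generalize hL2 : (Λ₁ ^ 2 * Λ₂ ^ 2 - Λ₁ ^ 2 - Λ₂ ^ 2) * U + Λ₂ ^ 2 = L2 at *
  generalize hW : U - 1 = w at *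
  generalize hD1 : Λ₂ ^ 2 * ζ₁ - ζ₂ = D1 at *
  generalize hD2 : ζ₁ + (Λ₁ ^ 2 - 1) * ζ₂ - Λ₁ ^ 2 = D2 at *
  obtain ⟨m, hmr⟩ : ∃ m, 2 * r = m + p := ⟨2 * r - p, by omega⟩
  have hm' : 2 * r - p = m := by omega
  have hmz : 2 * (r : ℤ) = m + p := by exact_mod_cast hmr
  have z1 : Λ₁ ^ (-(4 * (p : ℤ))) = ((Λ₁ ^ 4)⁻¹) ^ p := by
    rw [zpow_neg, zpow_mul, zpow_natCast, inv_pow]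
    rfl
  have z2 : (1 - Λ₁ ^ 2) ^ (2 * ((r : ℤ) - (p : ℤ))) =
      (1 - Λ₁ ^ 2) ^ m * ((1 - Λ₁ ^ 2)⁻¹) ^ p := by
    rw [show 2 * ((r : ℤ) - (p : ℤ)) = (m : ℤ) - p by linarith, zpow_sub₀ ha, zpow_natCast,
      zpow_natCast, inv_pow, div_eq_mul_inv]
  have z3 : (1 - Λ₂ ^ 2) ^ (-(2 * (r : ℤ))) =
      ((1 - Λ₂ ^ 2)⁻¹) ^ m * ((1 - Λ₂ ^ 2)⁻¹) ^ p := by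
    rw [hmz, zpow_neg, ← Nat.cast_add, zpow_natCast, pow_add, inv_pow, inv_pow, mul_inv]
  have z4 : w ^ (4 * ((r : ℤ) - (p : ℤ))) = (w ^ 2) ^ m * ((w ^ 2)⁻¹) ^ p := by
    rw [show 4 * ((r : ℤ) - (p : ℤ)) = ((2 * m : ℕ) : ℤ) - ((2 * p : ℕ) : ℤ) by
      push_cast; linarith, zpow_sub₀ hw0, zpow_natCast,
      zpow_natCast, inv_pow, div_eq_mul_inv, pow_mul, pow_mul]
  rw [hm'] at hcurve1
  rw [z1, z2, z3, z4, hm']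
  have hY2 : Y ^ (2 * r) =
      (R * Λ₁ ^ 2 * (1 - Λ₁ ^ 2) * w * ζ₂ * (ζ₁ - ζ₂) / (ζ₁ ^ 2 * D1 * D2 ^ 2) *
        (ζ₁ * (ζ₁ - 1) * (ζ₁ - Λ₁ ^ 2))) ^ m *
      (R * Λ₁ ^ 2 * (1 - Λ₁ ^ 2) * w * ζ₂ * (ζ₁ - ζ₂) / (ζ₁ ^ 2 * D1 * D2 ^ 2) *
        (ζ₂ * (ζ₂ - 1) * (ζ₂ - Λ₂ ^ 2))) ^ p := by
    rw [show Y = R * Λ₁ ^ 2 * (1 - Λ₁ ^ 2) * w * ζ₂ * (ζ₁ - ζ₂) / (ζ₁ ^ 2 * D1 * D2 ^ 2) *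
      η₁ * η₂ by rw [hY]; ring, mul_pow, mul_pow, hcurve1, hcurve2, hmr, pow_add, mul_pow _ _ m,
      mul_pow _ _ p, mul_pow (ζ₁ * _), mul_pow ζ₁, mul_pow (ζ₂ * _), mul_pow ζ₂]
    ac_rfl
  have hA : R * Λ₁ ^ 2 * (1 - Λ₁ ^ 2) * w * ζ₂ * (ζ₁ - ζ₂) / (ζ₁ ^ 2 * D1 * D2 ^ 2) *
        (ζ₁ * (ζ₁ - 1) * (ζ₁ - Λ₁ ^ 2)) =
      (1 - Λ₁ ^ 2) * (1 - Λ₂ ^ 2)⁻¹ * w ^ 2 * X := by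
    rw [hX, pow_two w]
    nth_rewrite 3 [hw]
    generalize (1 : ℂ) - Λ₂ ^ 2 = B at *
    generalize (1 : ℂ) - Λ₁ ^ 2 = A at *
    field_simp
  have hB : R * Λ₁ ^ 2 * (1 - Λ₁ ^ 2) * w * ζ₂ * (ζ₁ - ζ₂) / (ζ₁ ^ 2 * D1 * D2 ^ 2) *
        (ζ₂ * (ζ₂ - 1) * (ζ₂ - Λ₂ ^ 2)) =
      (Λ₁ ^ 4)⁻¹ * (1 - Λ₁ ^ 2)⁻¹ * (1 - Λ₂ ^ 2)⁻¹ * (w ^ 2)⁻¹ *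
      (Λ₁ ^ 2 * (Λ₂ ^ 2 - 1) * w * L2 *
      ((Λ₁ ^ 2) ^ 2 * (Λ₁ ^ 2 - 1) * (1 - Λ₂ ^ 2) * ζ₂ ^ 2 * (ζ₁ - 1) * (ζ₂ - 1) /
      (ζ₁ * D1 * D2 ^ 2))) *
      (Λ₁ ^ 2 * (Λ₂ ^ 2 - 1) * w * L1 *
      (- ((Λ₁ ^ 2) ^ 2 * (Λ₁ ^ 2 - 1) * (1 - Λ₂ ^ 2) * ζ₂ ^ 2 * (ζ₁ - 1) * (ζ₁ - ζ₂) *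
        (ζ₂ - Λ₂ ^ 2)) / (ζ₁ * D1 ^ 2 * D2 ^ 2))) := by
    rw [hR, show Λ₁ ^ 2 - 1 = - (1 - Λ₁ ^ 2) by ring, show Λ₂ ^ 2 - 1 = - (1 - Λ₂ ^ 2) by ring]
    generalize hs : ζ₂ - Λ₂ ^ 2 = s at *
    generalize (1 : ℂ) - Λ₂ ^ 2 = B at *
    generalize (1 : ℂ) - Λ₁ ^ 2 = A at *
    have hw' : w * (D1 * D2) = Λ₁ ^ 2 * B * ζ₂ * (ζ₁ - 1) := by
      rw [hw]; field_simp
    have hw2 : w ^ 2 * D1 ^ 2 * D2 ^ 2 = (Λ₁ ^ 2 * B * ζ₂ * (ζ₁ - 1)) ^ 2 := by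
      rw [← hw']; ring
    clear hw hw'
    field_simp
    linear_combination (-(L1 * L2 * s * ζ₂ ^ 2 * (ζ₁ - ζ₂) * (ζ₂ - 1))) * hw2
  rw [hY2, hA, hB]
  have fin : ∀ A B W X L I J K E F : ℂ, (A * B * W * X) ^ m * (L * I * J * K * E * F) ^ p =
      L ^ p * (A ^ m * I ^ p) * (B ^ m * J ^ p) * (W ^ m * K ^ p) * X ^ m * E ^ p * F ^ p := by
    intros
    simp only [mul_pow]
    ring
  exact fin _ _ _ _ _ _ _ _ _ _
end
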